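/- With 1, 2 denoting the first two indices of Fin n, the following identity of derivations holds: 2 • ⁅x_{1,2} • Θ_{1,2}, x_{1,2} • Ξ_1⁆ − ⁅Θ_{1,2}, (x_{1,2})² • Ξ_1⁆ = ((−2 : ℂ)) • ((x_{1,2})² • Θ_{1,2}). In particular, (x_{1,2})² • Θ_{1,2} lies in the Lie algebra generated by Θ_{1,2}, x_{1,2} • Θ_{1,2}, x_{1,2} • Ξ_1 and (x_{1,2})² • Ξ_1. (The linear-combination-of-brackets computation producing x_{1,2}² Θ_{1,2} in the degree-2 step of the proof of Proposition 4.5 of the paper, written in the commutator convention ⁅D,D'⁆ = D∘D' − D'∘D, in which the numerical coefficient differs from the paper's.) -/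

import Mathlib

/-!
Write `x = x_{1,2}`. Both fields come from the conjugation action, and `Ξ` is diagonal on the
variables: `x_{k,ℓ}` has weight `w k - w ℓ`, where `w` is `1` at the first index, `-1` at the
second, and `0` elsewhere. In particular `Ξ x = 2 x`, and since `Θ` lowers weights by `2`,
`⁅Θ, Ξ⁆ = 2 Θ` (`lie_Theta_Xi`). By the Leibniz rule
`⁅x Θ, x Ξ⁆ = x (Θ x) Ξ - x (Ξ x) Θ + x² ⁅Θ, Ξ⁆` and `⁅Θ, x² Ξ⁆ = 2 x (Θ x) Ξ + x² ⁅Θ, Ξ⁆`, so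
the `Ξ` terms cancel in the stated combination and `-4 x² Θ + x² ⁅Θ, Ξ⁆ = -2 x² Θ` remains.
-/

open MvPolynomial

/-- The polynomial ring in the `n²` matrix entries. -/
abbrev MatPoly (n : ℕ) := MvPolynomial (Fin n × Fin n) ℂ

/-- The fundamental vector field `Θ_{a,b}` of the conjugation action. -/
noncomputable def Theta {n : ℕ} (a b : Fin n) : Derivation ℂ (MatPoly n) (MatPoly n) :=
  ∑ k : Fin n,
    ((X (b, k) : MatPoly n) • (pderiv (a, k) : Derivation ℂ (MatPoly n) (MatPoly n))
      - (X (k, a) : MatPoly n) • (pderiv (k, b) : Derivation ℂ (MatPoly n) (MatPoly n)))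

/-- The hyperbolic vector field `Ξ_a`, where `a'` denotes the successor `a + 1`. -/
noncomputable def Xi {n : ℕ} (a a' : Fin n) : Derivation ℂ (MatPoly n) (MatPoly n) :=
  ∑ k : Fin n,
    ((X (a, k) : MatPoly n) • (pderiv (a, k) : Derivation ℂ (MatPoly n) (MatPoly n))
      - (X (a', k) : MatPoly n) • (pderiv (a', k) : Derivation ℂ (MatPoly n) (MatPoly n))
      - (X (k, a) : MatPoly n) • (pderiv (k, a) : Derivation ℂ (MatPoly n) (MatPoly n))
      + (X (k, a') : MatPoly n) • (pderiv (k, a') : Derivation ℂ (MatPoly n) (MatPoly n)))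

theorem derivation_sum_apply {n : ℕ} (D : Fin n → Derivation ℂ (MatPoly n) (MatPoly n))
    (f : MatPoly n) : (∑ k, D k) f = ∑ k, D k f := by
  have h := map_sum (Derivation.coeFnAddMonoidHom (R := ℂ) (A := MatPoly n) (M := MatPoly n))
    D Finset.univ
  have h' := congrFun h f
  rw [Finset.sum_apply] at h'
  exact h'

theorem Theta_X {n : ℕ} (a b p q : Fin n) :
    Theta a b (X (p, q)) =
      (if p = a then X (b, q) else 0) - (if q = b then X (p, a) else 0) := by
  simp only [Theta, derivation_sum_apply, Derivation.sub_apply,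
    Derivation.smul_apply, pderiv_X, Pi.single_apply, Prod.mk.injEq, smul_eq_mul, mul_ite,
    mul_one, mul_zero, Finset.sum_sub_distrib, ite_and]
  congr 1 <;> split_ifs <;> simp

/-- `Ξ` scales each variable `x_{p,q}` by its weight. -/
theorem Xi_X {n : ℕ} (a b p q : Fin n) :
    Xi a b (X (p, q)) =
      ((if p = a then 1 else 0) - (if p = b then 1 else 0)
        - (if q = a then 1 else 0) + (if q = b then 1 else 0)) * X (p, q) := by
  have row : ∀ c : Fin n, (∑ k : Fin n, (X (c, k) : MatPoly n) *
      (if p = c ∧ q = k then 1 else 0)) = (if p = c then 1 else 0) * X (p, q) := by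
    intro c
    by_cases h : p = c <;> simp [h]
  have col : ∀ c : Fin n, (∑ k : Fin n, (X (k, c) : MatPoly n) *
      (if p = k ∧ q = c then 1 else 0)) = (if q = c then 1 else 0) * X (p, q) := by
    intro c
    by_cases h : q = c <;> simp [h]
  simp only [Xi, derivation_sum_apply, Derivation.sub_apply,
    Derivation.add_apply, Derivation.smul_apply, pderiv_X, Pi.single_apply, Prod.mk.injEq,
    smul_eq_mul, Finset.sum_sub_distrib, Finset.sum_add_distrib, row, col]
  ring

theorem lie_Theta_Xi {n : ℕ} {a b : Fin n} (hab : a ≠ b) :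
    ⁅Theta a b, Xi a b⁆ = (2 : ℂ) • Theta a b := by
  apply MvPolynomial.derivation_ext
  rintro ⟨p, q⟩
  -- The weight of a variable is an integer constant, so `Theta` commutes with it.
  have weight : ∀ P : Prop, ∀ [Decidable P],
      Theta a b (if P then (1 : MatPoly n) else 0) = 0 := by
    intro P _
    split_ifs <;> simp
  have two : ∀ f : MatPoly n, (2 : ℂ) • f = 2 * f := by
    intro f
    rw [two_smul, two_mul]
  rw [Derivation.commutator_apply, Derivation.smul_apply, two, Xi_X, Derivation.leibniz,
    map_add, map_sub, map_sub, weight, weight, weight, weight, Theta_X, map_sub,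
    apply_ite (Xi a b), apply_ite (Xi a b), Xi_X, Xi_X, map_zero]
  have hba := hab.symm
  by_cases hpa : p = a <;> by_cases hqb : q = b <;> by_cases hpb : p = b <;>
    by_cases hqa : q = a <;> simp_all <;>
    first | ring1 | exact Or.inl (by ring1)

theorem stmt_10 {n : ℕ} (hn : 2 ≤ n)
    (i1 i2 : Fin n) (h1 : (i1 : ℕ) = 0) (h2 : (i2 : ℕ) = 1) :
    (2 : ℂ) • ⁅(X (i1, i2) : MatPoly n) • Theta i1 i2,
        (X (i1, i2) : MatPoly n) • Xi i1 i2⁆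
      - ⁅Theta i1 i2, ((X (i1, i2) : MatPoly n) ^ 2) • Xi i1 i2⁆ =
      (-2 : ℂ) • (((X (i1, i2) : MatPoly n) ^ 2) • Theta i1 i2)
    ∧ ((X (i1, i2) : MatPoly n) ^ 2) • Theta i1 i2 ∈
        LieSubalgebra.lieSpan ℂ (Derivation ℂ (MatPoly n) (MatPoly n))
          {Theta i1 i2, (X (i1, i2) : MatPoly n) • Theta i1 i2,
            (X (i1, i2) : MatPoly n) • Xi i1 i2,
            ((X (i1, i2) : MatPoly n) ^ 2) • Xi i1 i2} := by
  have hab : i1 ≠ i2 := by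
    rintro rfl
    omega
  have hXi : Xi i1 i2 (X (i1, i2)) = 2 * X (i1, i2) := by
    rw [Xi_X]
    simp [hab, hab.symm]
    ring
  have hcomm : ∀ f : MatPoly n,
      Theta i1 i2 (Xi i1 i2 f) = Xi i1 i2 (Theta i1 i2 f) + 2 * Theta i1 i2 f := by
    intro f
    have h := congrArg (fun D => D f) (lie_Theta_Xi hab)
    simp only [Derivation.commutator_apply, Derivation.smul_apply] at h
    rw [two_smul] at h
    linear_combination h
  have key : (2 : ℂ) • ⁅(X (i1, i2) : MatPoly n) • Theta i1 i2,
        (X (i1, i2) : MatPoly n) • Xi i1 i2⁆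
      - ⁅Theta i1 i2, ((X (i1, i2) : MatPoly n) ^ 2) • Xi i1 i2⁆ =
      (-2 : ℂ) • (((X (i1, i2) : MatPoly n) ^ 2) • Theta i1 i2) := by
    refine Derivation.ext fun f => ?_
    simp only [Derivation.sub_apply, Derivation.smul_apply, Derivation.commutator_apply,
      smul_eq_mul, Derivation.leibniz, pow_two, hXi, hcomm]
    simp only [neg_smul, two_smul]
    ring
  refine ⟨key, ?_⟩
  have hmem : (X (i1, i2) : MatPoly n) ^ 2 • Theta i1 i2 = (-2 : ℂ)⁻¹ •
      ((2 : ℂ) • ⁅(X (i1, i2) : MatPoly n) • Theta i1 i2,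
        (X (i1, i2) : MatPoly n) • Xi i1 i2⁆
      - ⁅Theta i1 i2, ((X (i1, i2) : MatPoly n) ^ 2) • Xi i1 i2⁆) := by
    rw [key, inv_smul_smul₀ (by norm_num)]
  rw [hmem]
  refine LieSubalgebra.smul_mem _ _ (sub_mem (LieSubalgebra.smul_mem _ _
    (LieSubalgebra.lie_mem _ (LieSubalgebra.subset_lieSpan ?_)
      (LieSubalgebra.subset_lieSpan ?_)))
    (LieSubalgebra.lie_mem _ (LieSubalgebra.subset_lieSpan ?_)
      (LieSubalgebra.subset_lieSpan ?_)))
  · exact Or.inr (Or.inl rfl)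
  · exact Or.inr (Or.inr (Or.inl rfl))
  · exact Or.inl rfl
  · exact Or.inr (Or.inr (Or.inr rfl))
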